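/- Let $(B_0,B_1)$ be a Banach couple satisfying Persson's approximation condition (H), and let $(A_0,A_1)$ be a Banach couple with $A_0\subset A_1$. Let $T:A_1\to B_1$ satisfy: $T(A_0)\subset B_0$ with $\|Ta\|_{B_0}\le C_0\|a\|_{A_0}$ for all $a\in A_0$; $\|Ta-Ta'\|_{B_1}\le C_1\|a-a'\|_{A_1}$ for all $a,a'\in A_1$; and there exists a compact subset $K\subset B_0$ with $Ta\in\|a\|_{A_0}K$ for each $a\in A_0$. Then for each $\theta\in(0,1)$ and $p\in[1,\infty]$, $T$ maps every bounded subset of $(A_0,A_1)_{\theta,p}$ to a relatively compact subset of $(B_0,B_1)_{\theta,p}$. -/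

import Mathlib

open scoped ENNReal
open Filter Topology MeasureTheory

/-- A member of a Banach couple, modeled as an extended-real-valued norm on a common
ambient real vector space `X`; the space itself is `{x | N x < ∞}`.  The `complete`
field expresses that this space is a Banach space. -/
structure CoupleNorm (X : Type*) [AddCommGroup X] [Module ℝ X] where
  N : X → ℝ≥0∞
  zero : N 0 = 0
  add_le : ∀ x y, N (x + y) ≤ N x + N y
  smul_eq : ∀ (c : ℝ) (x : X), N (c • x) = ENNReal.ofReal |c| * N x
  definite : ∀ x, N x = 0 → x = 0
  complete : ∀ u : ℕ → X, (∀ n, N (u n) < ∞) →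
    (∀ ε : ℝ≥0∞, 0 < ε → ∃ n0, ∀ m n, n0 ≤ m → n0 ≤ n → N (u m - u n) < ε) →
    ∃ x, Tendsto (fun n => N (u n - x)) atTop (𝓝 0)

namespace CoupleNorm

variable {X : Type*} [AddCommGroup X] [Module ℝ X]

/-- The Peetre K-functional of the couple `(N0, N1)`. -/
noncomputable def Kfun (N0 N1 : CoupleNorm X) (t : ℝ) (x : X) : ℝ≥0∞ :=
  ⨅ y : X, N0.N y + ENNReal.ofReal t * N1.N (x - y)

/-- The measure dt/t on (0,∞). -/
noncomputable def haarMeas : Measure ℝ :=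
  (volume.restrict (Set.Ioi (0 : ℝ))).withDensity fun t => ENNReal.ofReal t⁻¹

/-- The real interpolation norm `(θ, p)`, for `p ∈ [1,∞]`, as an extended real. -/
noncomputable def interpNorm (N0 N1 : CoupleNorm X) (θ : ℝ) (p : ℝ≥0∞) (x : X) : ℝ≥0∞ :=
  if p = ∞ then ⨆ t : {t : ℝ // 0 < t}, (ENNReal.ofReal t.1) ^ (-θ) * Kfun N0 N1 t.1 x
  else (∫⁻ t, ((ENNReal.ofReal t) ^ (-θ) * Kfun N0 N1 t x) ^ p.toReal ∂haarMeas) ^ (1 / p.toReal)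

/-- `N0 ⊂ N1`: continuous embedding (the inclusion of domains is then automatic). -/
def Embeds (N0 N1 : CoupleNorm X) : Prop :=
  ∃ c : ℝ, 0 < c ∧ ∀ x, N1.N x ≤ ENNReal.ofReal c * N0.N x

/-- A set bounded with respect to a generalized norm. -/
def BddWith (NN : X → ℝ≥0∞) (S : Set X) : Prop :=
  ∃ R : ℝ, ∀ x ∈ S, NN x ≤ ENNReal.ofReal R

/-- Sequential relative compactness with respect to a generalized norm. -/
def RelCompactWith (NN : X → ℝ≥0∞) (S : Set X) : Prop :=
  ∀ u : ℕ → X, (∀ n, u n ∈ S) →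
    ∃ (σ : ℕ → ℕ) (x : X), StrictMono σ ∧
      Tendsto (fun n => NN (u (σ n) - x)) atTop (𝓝 0)

/-- Sequential compactness (with limits inside the set) w.r.t. a generalized norm. -/
def CompactWith (NN : X → ℝ≥0∞) (S : Set X) : Prop :=
  ∀ u : ℕ → X, (∀ n, u n ∈ S) →
    ∃ x ∈ S, ∃ σ : ℕ → ℕ, StrictMono σ ∧
      Tendsto (fun n => NN (u (σ n) - x)) atTop (𝓝 0)

end CoupleNorm

/-- Persson's approximation condition (H) for the couple `(B0, B1)`. -/
def PerssonH {Y : Type*} [AddCommGroup Y] [Module ℝ Y] (B0 B1 : CoupleNorm Y) : Prop :=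
  ∀ K : Set Y, K ⊆ {b | B0.N b < ∞} → CoupleNorm.CompactWith B0.N K →
    ∃ c : ℝ, 0 < c ∧ ∀ ε : ℝ, 0 < ε → ∃ P : Y →ₗ[ℝ] Y,
      (∀ b : Y, (B0.N b < ∞ ∨ B1.N b < ∞) → B0.N (P b) < ∞ ∧ B1.N (P b) < ∞) ∧
      (∀ b : Y, B0.N (P b) ≤ ENNReal.ofReal c * B0.N b) ∧
      (∀ b : Y, B1.N (P b) ≤ ENNReal.ofReal c * B1.N b) ∧
      (∀ b ∈ K, B0.N (P b - b) < ENNReal.ofReal ε)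

open scoped NNReal Pointwise

/-
Split `T a = (T a - P (T a)) + P (T a)`, where `P` is one of the operators of condition (H).

On `A₀` the vector `T y` is `‖y‖` times an element of `K`, so `T - P ∘ T` is bounded from `A₀` to
`B₀` with a small constant `δ`, and it is Lipschitz from `A₁` to `B₁` with a constant `δ l` that
does not depend on `P`. Hence the K-functional satisfies `K (t, T a - P (T a)) ≤ δ K (l t, a)`,
and substituting `l t` in the interpolation norm yields the factor `δ l ^ θ`, of order
`δ ^ (1 - θ)`.

For fixed `P`, the image of a bounded set `M` under `P ∘ T` is totally bounded. Elements of `M`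
are `A₁`-close to a ball of `A₀`, whose image under `T` lies in the compact set `[0, r] • K`, so
it is enough that `P` is bounded from `B₀` and from `B₁` to the interpolation space. The
interpolation norm is lower semicontinuous and finite on `B₀ ∩ B₁`, which contains the range of
`P`; the Baire category theorem turns finiteness into boundedness.
-/

namespace CoupleNorm

/-! ### Weighted Lebesgue norms for the measure `dt / t` -/

theorem ae_haarMeas_pos : ∀ᵐ t ∂haarMeas, 0 < t :=
  (withDensity_absolutelyContinuous _ _).ae_le (ae_restrict_mem measurableSet_Ioi)

theorem lintegral_haarMeas {f : ℝ → ℝ≥0∞} (hf : Measurable f) :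
    ∫⁻ t, f t ∂haarMeas = ∫⁻ t in Set.Ioi 0, ENNReal.ofReal t⁻¹ * f t :=
  lintegral_withDensity_eq_lintegral_mul _ (by fun_prop) hf

theorem haarMeas_Icc {a b : ℝ} (ha : 0 < a) (hab : a ≤ b) :
    haarMeas (Set.Icc a b) = ENNReal.ofReal (Real.log (b / a)) := by
  have hsub : Set.Icc a b ∩ Set.Ioi 0 = Set.Icc a b :=
    Set.inter_eq_left.2 fun t ht => ha.trans_le ht.1
  have hint : IntegrableOn (fun t : ℝ => t⁻¹) (Set.Icc a b) :=
    (continuousOn_inv₀.mono fun t ht => (ha.trans_le ht.1).ne').integrableOn_Icc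
  rw [haarMeas, withDensity_apply _ measurableSet_Icc, Measure.restrict_restrict measurableSet_Icc,
    hsub, ← integral_inv_of_pos ha (ha.trans_le hab), intervalIntegral.integral_of_le hab,
    ← integral_Icc_eq_integral_Ioc, ofReal_integral_eq_lintegral_ofReal hint]
  exact (ae_restrict_iff' measurableSet_Icc).2
    (.of_forall fun t ht => inv_nonneg.2 (ha.le.trans ht.1))

theorem measurePreserving_mul_left_haarMeas {l : ℝ} (hl : 0 < l) :
    MeasurePreserving (l * ·) haarMeas haarMeas := by
  refine ⟨measurable_const_mul l, Measure.ext_of_lintegral _ fun f hf => ?_⟩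
  have hg : Measurable fun t : ℝ => ENNReal.ofReal t⁻¹ * f t := by fun_prop
  calc ∫⁻ t, f t ∂haarMeas.map (l * ·)
      = ∫⁻ t in Set.Ioi 0, ENNReal.ofReal t⁻¹ * f (l * t) := by
        rw [lintegral_map hf (measurable_const_mul l), lintegral_haarMeas (by fun_prop)]
    _ = ∫⁻ t in Set.Ioi 0, ENNReal.ofReal l * (ENNReal.ofReal (l * t)⁻¹ * f (l * t)) := by
        refine setLIntegral_congr_fun measurableSet_Ioi fun t _ => ?_
        rw [← mul_assoc, ← ENNReal.ofReal_mul hl.le, mul_inv, mul_inv_cancel_left₀ hl.ne']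
    _ = ∫⁻ t in Set.Ioi 0, ENNReal.ofReal t⁻¹ * f t := by
        conv_rhs => rw [← Real.smul_map_volume_mul_left hl.ne', Measure.restrict_smul,
          lintegral_smul_measure, setLIntegral_map measurableSet_Ioi hg (measurable_const_mul l),
          Set.preimage_const_mul_Ioi₀ _ hl, zero_div, abs_of_pos hl, smul_eq_mul]
        exact lintegral_const_mul _ (by fun_prop)
    _ = ∫⁻ t, f t ∂haarMeas := (lintegral_haarMeas hf).symm

theorem eLpNorm_liminf_le {α : Type*} [MeasurableSpace α] {μ : Measure α} {f : ℕ → α → ℝ≥0∞}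
    (hf : ∀ n, Measurable (f n)) (p : ℝ≥0∞) :
    eLpNorm (fun a => liminf (fun n => f n a) atTop) p μ ≤
      liminf (fun n => eLpNorm (f n) p μ) atTop := by
  rcases eq_or_ne p 0 with rfl | hp0
  · simp
  rcases eq_or_ne p ∞ with rfl | hp
  · exact ENNReal.essSup_liminf_le f
  have map_liminf_rpow {r : ℝ} (hr : 0 < r) (u : ℕ → ℝ≥0∞) :
      liminf u atTop ^ r = liminf (fun n => u n ^ r) atTop :=
    (ENNReal.monotone_rpow_of_nonneg hr.le).map_liminf_of_continuousAt u
      ENNReal.continuous_rpow_const.continuousAt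
  have hq : 0 < p.toReal := ENNReal.toReal_pos hp0 hp
  simp only [eLpNorm_eq_lintegral_rpow_enorm_toReal hp0 hp, enorm_eq_self, map_liminf_rpow hq]
  rw [← map_liminf_rpow (one_div_pos.2 hq)]
  exact ENNReal.rpow_le_rpow (lintegral_liminf_le fun n => (hf n).pow_const _) (by positivity)

theorem eLpNorm_lt_top_of_le_one {α : Type*} [MeasurableSpace α] {μ : Measure α} {f : α → ℝ≥0∞}
    (hf : ∀ᵐ a ∂μ, f a ≤ 1) (hint : ∫⁻ a, f a ∂μ < ∞) {p : ℝ≥0∞} (hp : 1 ≤ p) :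
    eLpNorm f p μ < ∞ := by
  rcases eq_or_ne p ∞ with rfl | hp'
  · exact (essSup_le_of_ae_le 1 hf).trans_lt ENNReal.one_lt_top
  rw [eLpNorm_lt_top_iff_lintegral_rpow_enorm_lt_top (one_pos.trans_le hp).ne' hp']
  refine (lintegral_mono_ae ?_).trans_lt hint
  filter_upwards [hf] with a ha
  exact ENNReal.rpow_le_self_of_le_one ha (by
    simpa using ENNReal.toReal_mono hp' hp)

/-- The functional `Φ_{θ,p}(f) = ‖t^{-θ} f(t)‖_{L^p(dt/t)}` of the real interpolation method.  For
`p = ∞` it is an essential supremum, whereas `interpNorm` takes a supremum; the two agree on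
monotone functions. -/
noncomputable def weightedLpNorm (θ : ℝ) (p : ℝ≥0∞) (f : ℝ → ℝ≥0∞) : ℝ≥0∞ :=
  eLpNorm (fun t => ENNReal.ofReal t ^ (-θ) * f t) p haarMeas

section WeightedLpNorm

variable {θ : ℝ} {p : ℝ≥0∞} {f g : ℝ → ℝ≥0∞}

theorem weightedLpNorm_le_mul (c : ℝ≥0) (h : ∀ t, 0 < t → f t ≤ c * g t) :
    weightedLpNorm θ p f ≤ c * weightedLpNorm θ p g := by
  refine eLpNorm_le_nnreal_smul_eLpNorm_of_ae_le_mul' ?_ p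
  filter_upwards [ae_haarMeas_pos] with t ht
  simp only [enorm_eq_self]
  rw [mul_left_comm]
  gcongr
  exact h t ht

theorem weightedLpNorm_mono (h : ∀ t, 0 < t → f t ≤ g t) :
    weightedLpNorm θ p f ≤ weightedLpNorm θ p g := by
  simpa using weightedLpNorm_le_mul (θ := θ) (p := p) 1 (by simpa using h)

theorem weightedLpNorm_add_le (hp : 1 ≤ p) (hf : Measurable f) (hg : Measurable g) :
    weightedLpNorm θ p (fun t => f t + g t) ≤ weightedLpNorm θ p f + weightedLpNorm θ p g := by
  simp only [weightedLpNorm, mul_add]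
  exact eLpNorm_add_le (by fun_prop : Measurable _).aestronglyMeasurable
    (by fun_prop : Measurable _).aestronglyMeasurable hp

theorem weightedLpNorm_comp_mul_left_le (hf : Measurable f) {l : ℝ} (hl : 0 < l) :
    weightedLpNorm θ p (fun t => f (l * t)) ≤ ENNReal.ofReal l ^ θ * weightedLpNorm θ p f := by
  have hw : Measurable fun t => ENNReal.ofReal t ^ (-θ) * f t := by fun_prop
  have hc : ENNReal.ofReal l ^ θ ≠ ∞ :=
    ENNReal.rpow_ne_top_of_ne_zero (by simpa using hl) ENNReal.ofReal_ne_top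
  lift ENNReal.ofReal l ^ θ to ℝ≥0 using hc with c hc'
  rw [weightedLpNorm, weightedLpNorm,
    ← eLpNorm_comp_measurePreserving hw.aestronglyMeasurable
      (measurePreserving_mul_left_haarMeas hl)]
  refine eLpNorm_le_nnreal_smul_eLpNorm_of_ae_le_mul' (.of_forall fun t => ?_) p
  simp only [enorm_eq_self, Function.comp_apply]
  rw [hc', ENNReal.ofReal_mul hl.le, ENNReal.mul_rpow_of_ne_top (by simp) (by simp), ← mul_assoc,
    ← mul_assoc, ← ENNReal.rpow_add _ _ (by simpa using hl) (by simp), add_neg_cancel,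
    ENNReal.rpow_zero, one_mul]

theorem weightedLpNorm_liminf_le {u : ℕ → ℝ → ℝ≥0∞} (hu : ∀ n, Measurable (u n)) :
    weightedLpNorm θ p (fun t => liminf (fun n => u n t) atTop) ≤
      liminf (fun n => weightedLpNorm θ p (u n)) atTop := by
  refine (eLpNorm_mono_enorm_ae ?_).trans (eLpNorm_liminf_le (fun n => by fun_prop) p)
  filter_upwards [ae_haarMeas_pos] with t ht
  have hw : ENNReal.ofReal t ^ (-θ) ≠ ∞ :=
    ENNReal.rpow_ne_top_of_ne_zero (by simpa using ht) ENNReal.ofReal_ne_top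
  exact ((mul_right_mono (a := ENNReal.ofReal t ^ (-θ))).map_liminf_of_continuousAt _
    (ENNReal.continuous_const_mul hw).continuousAt).le

theorem mul_log_rpow_le_weightedLpNorm (hθ : 0 ≤ θ) (hp : p ≠ 0) (hf : Monotone f) {t b : ℝ}
    (ht : 0 < t) (hb : 1 < b) :
    ENNReal.ofReal (b * t) ^ (-θ) * f t * ENNReal.ofReal (Real.log b) ^ (1 / p.toReal) ≤
      weightedLpNorm θ p f := by
  have htb : t ≤ b * t := le_mul_of_one_le_left ht.le hb.le
  have hμ : haarMeas (Set.Icc t (b * t)) = ENNReal.ofReal (Real.log b) := by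
    rw [haarMeas_Icc ht htb, mul_div_cancel_right₀ _ ht.ne']
  rw [← hμ, ← enorm_eq_self (_ * f t),
    ← eLpNorm_indicator_const' measurableSet_Icc (by simpa [hμ] using Real.log_pos hb) hp]
  refine eLpNorm_mono_enorm fun s => ?_
  by_cases hs : s ∈ Set.Icc t (b * t)
  · simp only [Set.indicator_of_mem hs, enorm_eq_self]
    gcongr ?_ * ?_
    · rw [ENNReal.rpow_neg, ENNReal.rpow_neg]
      gcongr
      exact hs.2
    · exact hf hs.1
  · simp [Set.indicator_of_notMem hs]

theorem le_rpow_mul_weightedLpNorm (hθ : 0 ≤ θ) (hp : p ≠ 0) (hf : Monotone f) {t : ℝ}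
    (ht : 0 < t) :
    f t ≤ ENNReal.ofReal (Real.exp 1 * t) ^ θ * weightedLpNorm θ p f := by
  have h := mul_log_rpow_le_weightedLpNorm hθ hp hf ht (Real.one_lt_exp_iff.2 one_pos)
  have het : ENNReal.ofReal (Real.exp 1 * t) ≠ 0 := by simpa using by positivity
  rw [Real.log_exp, ENNReal.ofReal_one, ENNReal.one_rpow, mul_one] at h
  calc f t = ENNReal.ofReal (Real.exp 1 * t) ^ θ *
        (ENNReal.ofReal (Real.exp 1 * t) ^ (-θ) * f t) := by
        rw [← mul_assoc, ← ENNReal.rpow_add _ _ het ENNReal.ofReal_ne_top, add_neg_cancel,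
          ENNReal.rpow_zero, one_mul]
    _ ≤ _ := by gcongr

theorem weightedLpNorm_top_eq_iSup (hθ : 0 ≤ θ) (hf : Monotone f) :
    weightedLpNorm θ ∞ f = ⨆ t : {t : ℝ // 0 < t}, ENNReal.ofReal t.1 ^ (-θ) * f t.1 := by
  refine le_antisymm (essSup_le_of_ae_le _ ?_) (iSup_le fun ⟨t, ht⟩ => ?_)
  · filter_upwards [ae_haarMeas_pos] with t ht
    exact le_iSup (fun t : {t : ℝ // 0 < t} => ENNReal.ofReal t.1 ^ (-θ) * f t.1) ⟨t, ht⟩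
  · have hlim : Tendsto (fun b : ℝ => ENNReal.ofReal (b * t) ^ (-θ) * f t) (𝓝[>] 1)
        (𝓝 (ENNReal.ofReal t ^ (-θ) * f t)) := by
      have hcont : Continuous fun b : ℝ => ENNReal.ofReal (b * t) ^ (-θ) :=
        ENNReal.continuous_rpow_const.comp (ENNReal.continuous_ofReal.comp (by fun_prop))
      have hpos : ENNReal.ofReal t ^ (-θ) ≠ 0 := by simp [hθ.not_gt]
      exact ENNReal.Tendsto.mul_const ((hcont.tendsto' 1 _ (by simp)).mono_left
        nhdsWithin_le_nhds) (.inl hpos)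
    refine le_of_tendsto hlim ?_
    filter_upwards [self_mem_nhdsWithin] with b hb
    simpa using mul_log_rpow_le_weightedLpNorm hθ ENNReal.top_ne_zero hf ht hb

end WeightedLpNorm

theorem integrableOn_rpow_mul_min_one {θ : ℝ} (hθ₀ : 0 < θ) (hθ₁ : θ < 1) :
    IntegrableOn (fun t : ℝ => t⁻¹ * (t ^ (-θ) * min 1 t)) (Set.Ioi 0) := by
  rw [← Set.Ioc_union_Ioi_eq_Ioi zero_le_one]
  refine IntegrableOn.union ?_ ?_
  · have h : IntegrableOn (fun t : ℝ => t ^ (-θ)) (Set.Ioc 0 1) :=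
      (intervalIntegrable_iff_integrableOn_Ioc_of_le zero_le_one).1
        (intervalIntegral.intervalIntegrable_rpow' (by linarith))
    refine h.congr_fun (fun t ht => ?_) measurableSet_Ioc
    rw [min_eq_right ht.2, mul_left_comm, inv_mul_cancel₀ ht.1.ne', mul_one]
  · have h : IntegrableOn (fun t : ℝ => t ^ (-1 + -θ)) (Set.Ioi 1) :=
      integrableOn_Ioi_rpow_of_lt (by linarith) one_pos
    refine h.congr_fun (fun t ht => ?_) measurableSet_Ioi
    have ht₁ : 1 < t := ht
    simp only [min_eq_left ht₁.le, mul_one]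
    rw [Real.rpow_add (by linarith), Real.rpow_neg_one]

theorem weightedLpNorm_min_one_lt_top {θ : ℝ} (hθ₀ : 0 < θ) (hθ₁ : θ < 1) {p : ℝ≥0∞}
    (hp : 1 ≤ p) : weightedLpNorm θ p (fun t => ENNReal.ofReal (min 1 t)) < ∞ := by
  have weight_eq {t : ℝ} (ht : 0 < t) : ENNReal.ofReal t ^ (-θ) * ENNReal.ofReal (min 1 t) =
      ENNReal.ofReal (t ^ (-θ) * min 1 t) := by
    rw [ENNReal.ofReal_rpow_of_pos ht, ← ENNReal.ofReal_mul (by positivity)]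
  refine eLpNorm_lt_top_of_le_one ?_ ?_ hp
  · filter_upwards [ae_haarMeas_pos] with t ht
    rw [weight_eq ht, ENNReal.ofReal_le_one]
    rcases le_total t 1 with h | h
    · calc t ^ (-θ) * min 1 t = t ^ (-θ + 1) := by
            rw [min_eq_right h, Real.rpow_add_one ht.ne']
        _ ≤ 1 := Real.rpow_le_one ht.le h (by linarith)
    · rw [min_eq_left h, mul_one]
      exact Real.rpow_le_one_of_one_le_of_nonpos h (by linarith)
  · rw [lintegral_haarMeas (by fun_prop)]
    refine lt_of_eq_of_lt ?_ (integrableOn_rpow_mul_min_one hθ₀ hθ₁).lintegral_lt_top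
    refine setLIntegral_congr_fun measurableSet_Ioi fun t ht => ?_
    rw [weight_eq ht, ENNReal.ofReal_mul (inv_nonneg.2 (le_of_lt ht))]

theorem exists_pos_mul_rpow_lt {θ : ℝ} (hθ : θ < 1) (s : ℝ≥0) {η : ℝ≥0∞} (hη : 0 < η) :
    ∃ t : ℝ, 0 < t ∧ s * ENNReal.ofReal t ^ θ < ENNReal.ofReal t * η := by
  have hlim : Tendsto (fun t : ℝ => s * ENNReal.ofReal (t ^ (-(1 - θ)))) atTop (𝓝 0) := by
    simpa using ENNReal.Tendsto.const_mul (a := s)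
      (ENNReal.tendsto_ofReal (tendsto_rpow_neg_atTop (sub_pos.2 hθ))) (.inr ENNReal.coe_ne_top)
  obtain ⟨t, hlt, ht⟩ := ((hlim.eventually_lt_const hη).and (eventually_gt_atTop 0)).exists
  refine ⟨t, ht, ?_⟩
  calc s * ENNReal.ofReal t ^ θ
      = ENNReal.ofReal t * (s * ENNReal.ofReal (t ^ (-(1 - θ)))) := by
        rw [mul_left_comm, ← ENNReal.ofReal_mul ht.le, ENNReal.ofReal_rpow_of_pos ht,
          neg_sub, Real.rpow_sub_one ht.ne', mul_div_cancel₀ _ ht.ne']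
    _ < ENNReal.ofReal t * η := by
        gcongr
        exact ENNReal.ofReal_ne_top

theorem exists_mul_eq_and_mul_rpow_mul_lt {θ : ℝ} (hθ : θ < 1) {C : ℝ≥0} (hC : 0 < C) (R : ℝ≥0)
    {ε : ℝ≥0∞} (hε : 0 < ε) :
    ∃ (δ : ℝ≥0) (l : ℝ), 0 < δ ∧ 0 < l ∧ δ * ENNReal.ofReal l = C ∧
      δ * (ENNReal.ofReal l ^ θ * R) < ε := by
  obtain ⟨l, hl, hlt⟩ := exists_pos_mul_rpow_lt hθ (C * R) hε
  lift l to ℝ≥0 using hl.le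
  rw [NNReal.coe_pos] at hl
  rw [ENNReal.ofReal_coe_nnreal] at hlt
  refine ⟨C / l, l, by positivity, hl, ?_, ?_⟩
  · rw [ENNReal.ofReal_coe_nnreal, ← ENNReal.coe_mul, div_mul_cancel₀ _ hl.ne']
  · rw [ENNReal.ofReal_coe_nnreal, ENNReal.coe_div hl.ne', ← ENNReal.mul_div_right_comm]
    refine ENNReal.div_lt_of_lt_mul' (lt_of_eq_of_lt ?_ hlt)
    push_cast
    ring

/-! ### Extended seminorms -/

/-- An extended seminorm on a real vector space; the couples and their interpolation spaces are
the finiteness domains of such functions.  Applying `smul_le` to `c⁻¹` shows that it is an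
equality for `c ≠ 0`. -/
structure IsExtendedSeminorm {X : Type*} [AddCommGroup X] [Module ℝ X] (q : X → ℝ≥0∞) : Prop where
  add_le : ∀ x y, q (x + y) ≤ q x + q y
  smul_le : ∀ (c : ℝ) x, q (c • x) ≤ ‖c‖ₑ * q x

section AddCommGroup

variable {X Y : Type*} [AddCommGroup X] [AddCommGroup Y]

/-- Sequential completeness with respect to a generalized norm. -/
def CompleteWith (q : X → ℝ≥0∞) : Prop :=
  ∀ u : ℕ → X, (∀ ε : ℝ≥0∞, 0 < ε → ∃ n₀, ∀ m ≥ n₀, ∀ n ≥ n₀, q (u m - u n) < ε) →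
    ∃ x, Tendsto (fun n => q (u n - x)) atTop (𝓝 0)

/-- Total boundedness with respect to a generalized norm, the centres of the nets being allowed
to lie outside the set. -/
def TotallyBoundedWith (q : X → ℝ≥0∞) (S : Set X) : Prop :=
  ∀ ε : ℝ≥0∞, 0 < ε → ∃ F : Set X, F.Finite ∧ ∀ x ∈ S, ∃ y ∈ F, q (x - y) < ε

/-- Sequential lower semicontinuity of `q` for the convergence defined by the generalized
norm `r`. -/
def LowerSemicontinuousWith (r q : X → ℝ≥0∞) : Prop :=
  ∀ (u : ℕ → X) (x : X), Tendsto (fun n => r (u n - x)) atTop (𝓝 0) →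
    q x ≤ liminf (fun n => q (u n)) atTop

theorem TotallyBoundedWith.image {q : X → ℝ≥0∞} {r : Y → ℝ≥0∞} {S : Set X}
    (hS : TotallyBoundedWith q S) {f : X → Y} {C : ℝ≥0}
    (hf : ∀ x y, r (f x - f y) ≤ C * q (x - y)) : TotallyBoundedWith r (f '' S) := by
  intro ε hε
  obtain ⟨δ, hδ, hCδ⟩ := ENNReal.exists_nnreal_pos_mul_lt ENNReal.coe_ne_top (a := C) hε.ne'
  obtain ⟨F, hF, hSF⟩ := hS δ (by exact_mod_cast hδ)
  refine ⟨f '' F, hF.image f, Set.forall_mem_image.2 fun x hx => ?_⟩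
  obtain ⟨y, hy, hxy⟩ := hSF x hx
  refine ⟨f y, Set.mem_image_of_mem f hy, ((hf x y).trans ?_).trans_lt hCδ⟩
  rw [mul_comm]
  gcongr

theorem LowerSemicontinuousWith.comp {F : Type*} [FunLike F Y X] [AddMonoidHomClass F Y X]
    {q r : X → ℝ≥0∞} (hq : LowerSemicontinuousWith r q) {s : Y → ℝ≥0∞} (f : F) {C : ℝ≥0}
    (hf : ∀ y, r (f y) ≤ C * s y) : LowerSemicontinuousWith s fun y => q (f y) := by
  intro u y hu
  refine hq (fun n => f (u n)) (f y) ?_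
  have h := ENNReal.Tendsto.const_mul hu (.inr (ENNReal.coe_ne_top (r := C)))
  rw [mul_zero] at h
  exact tendsto_of_tendsto_of_tendsto_of_le_of_le tendsto_const_nhds h (fun _ => zero_le)
    fun n => by simpa only [map_sub] using hf (u n - y)

end AddCommGroup

section Module

variable {X : Type*} [AddCommGroup X] [Module ℝ X]

namespace IsExtendedSeminorm

variable {q r : X → ℝ≥0∞}

theorem map_zero (hq : IsExtendedSeminorm q) : q 0 = 0 := by
  simpa using hq.smul_le 0 0

theorem neg_le (hq : IsExtendedSeminorm q) (x : X) : q (-x) ≤ q x := by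
  simpa using hq.smul_le (-1) x

theorem map_neg (hq : IsExtendedSeminorm q) (x : X) : q (-x) = q x :=
  (hq.neg_le x).antisymm (by simpa using hq.neg_le (-x))

theorem map_sub_comm (hq : IsExtendedSeminorm q) (x y : X) : q (x - y) = q (y - x) := by
  rw [← hq.map_neg, neg_sub]

theorem sub_le (hq : IsExtendedSeminorm q) (x y : X) : q (x - y) ≤ q x + q y := by
  rw [sub_eq_add_neg, ← hq.map_neg y]
  exact hq.add_le x (-y)

theorem sub_le_sub_add_sub (hq : IsExtendedSeminorm q) (x y z : X) :
    q (x - z) ≤ q (x - y) + q (y - z) := by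
  rw [← sub_add_sub_cancel x y z]
  exact hq.add_le _ _

theorem nnreal_smul_le (hq : IsExtendedSeminorm q) (c : ℝ≥0) (x : X) :
    q ((c : ℝ) • x) ≤ c * q x := by
  simpa only [NNReal.enorm_eq] using hq.smul_le c x

theorem comp_linearMap {Y : Type*} [AddCommGroup Y] [Module ℝ Y] (hq : IsExtendedSeminorm q)
    (f : Y →ₗ[ℝ] X) : IsExtendedSeminorm fun y => q (f y) where
  add_le x y := by simpa only [map_add] using hq.add_le (f x) (f y)
  smul_le c x := by simpa only [map_smul] using hq.smul_le c (f x)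

/-- The pseudo-(extended-)metric `q (x - y)`; it makes the metric notions of the library
available for extended seminorms. -/
noncomputable abbrev toPseudoEMetricSpace (hq : IsExtendedSeminorm q) : PseudoEMetricSpace X where
  edist x y := q (x - y)
  edist_self x := by simp only [sub_self, hq.map_zero]
  edist_comm := hq.map_sub_comm
  edist_triangle := hq.sub_le_sub_add_sub

theorem completeSpace (hq : IsExtendedSeminorm q) (hc : CompleteWith q) :
    let _ := hq.toPseudoEMetricSpace
    CompleteSpace X := by
  intro _
  refine EMetric.complete_of_cauchySeq_tendsto fun u hu => ?_
  obtain ⟨x, hx⟩ := hc u (EMetric.cauchySeq_iff.1 hu)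
  exact ⟨x, tendsto_iff_edist_tendsto_0.2 hx⟩

theorem completeWith_of_lowerSemicontinuousWith (hr : IsExtendedSeminorm r) (hc : CompleteWith r)
    {C : ℝ≥0} (hrq : ∀ x, r x ≤ C * q x) (hlsc : LowerSemicontinuousWith r q) :
    CompleteWith q := by
  intro u hu
  obtain ⟨x, hx⟩ : ∃ x, Tendsto (fun n => r (u n - x)) atTop (𝓝 0) := by
    refine hc u fun ε hε => ?_
    obtain ⟨δ, hδ, hCδ⟩ := ENNReal.exists_nnreal_pos_mul_lt ENNReal.coe_ne_top (a := C) hε.ne'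
    obtain ⟨n₀, hn₀⟩ := hu δ (by exact_mod_cast hδ)
    refine ⟨n₀, fun m hm n hn => ((hrq _).trans ?_).trans_lt hCδ⟩
    rw [mul_comm]
    gcongr
    exact (hn₀ m hm n hn).le
  refine ⟨x, ENNReal.tendsto_atTop_zero.2 fun ε hε => ?_⟩
  obtain ⟨n₀, hn₀⟩ := hu ε hε
  refine ⟨n₀, fun m hm => (hlsc (fun n => u m - u n) (u m - x) ?_).trans ?_⟩
  · simpa only [sub_sub_sub_cancel_left, hr.map_sub_comm x] using hx
  · exact liminf_le_of_frequently_le' (eventually_atTop.2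
      ⟨n₀, fun n hn => (hn₀ m hm n hn).le⟩).frequently

theorem le_mul_of_forall_lt_imp_le (hq : IsExtendedSeminorm q) (hr : IsExtendedSeminorm r)
    {C δ : ℝ≥0} (hC : 0 < C) (hδ : 0 < δ) (h : ∀ x, q x < δ → r x ≤ C) (x : X) :
    r x ≤ (C / δ : ℝ≥0) * q x := by
  have hD : ((C / δ : ℝ≥0) : ℝ≥0∞) ≠ 0 := by exact_mod_cast (div_pos hC hδ).ne'
  rcases eq_top_or_lt_top (q x) with hx | hx
  · simp [hx, ENNReal.mul_top hD]
  have le_mul_of_lt (s : ℝ≥0) (hs : q x < s) : r x ≤ (C / δ : ℝ≥0) * s := by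
    have hs₀ : 0 < s := by exact_mod_cast pos_of_gt hs
    have hlt : q (((δ / s : ℝ≥0) : ℝ) • x) < δ := by
      refine (hq.nnreal_smul_le _ _).trans_lt ?_
      calc ((δ / s : ℝ≥0) : ℝ≥0∞) * q x < (δ / s : ℝ≥0) * s := by
            gcongr
            exact ENNReal.coe_ne_top
        _ = δ := by rw [← ENNReal.coe_mul, div_mul_cancel₀ _ hs₀.ne']
    calc r x = r (((s / δ : ℝ≥0) : ℝ) • ((δ / s : ℝ≥0) : ℝ) • x) := by
          rw [smul_smul, ← NNReal.coe_mul, div_mul_div_cancel₀ hδ.ne', div_self hs₀.ne',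
            NNReal.coe_one, one_smul]
      _ ≤ (s / δ : ℝ≥0) * C := (hr.nnreal_smul_le _ _).trans (by gcongr; exact h _ hlt)
      _ = (C / δ : ℝ≥0) * s := by rw [← ENNReal.coe_mul, ← ENNReal.coe_mul, div_mul_comm, mul_comm]
  have : (𝓝[>] (q x)).NeBot := nhdsGT_neBot_of_exists_gt ⟨∞, hx⟩
  have hlim : Tendsto (fun s : ℝ≥0∞ => (C / δ : ℝ≥0) * s) (𝓝[>] (q x))
      (𝓝 ((C / δ : ℝ≥0) * q x)) :=
    ((ENNReal.continuous_const_mul ENNReal.coe_ne_top).tendsto _).mono_left nhdsWithin_le_nhds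
  refine ge_of_tendsto hlim ?_
  filter_upwards [self_mem_nhdsWithin, nhdsWithin_le_nhds (Iio_mem_nhds hx)] with s hs hs'
  lift s to ℝ≥0 using hs'.ne
  exact le_mul_of_lt s hs

theorem exists_le_mul_of_lowerSemicontinuousWith (hq : IsExtendedSeminorm q)
    (hc : CompleteWith q) (hr : IsExtendedSeminorm r) (hlsc : LowerSemicontinuousWith q r)
    (hfin : ∀ x, q x < ∞ → r x < ∞) : ∃ D : ℝ≥0, ∀ x, r x ≤ D * q x := by
  let _ := hq.toPseudoEMetricSpace
  have edist_eq (x y : X) : edist x y = q (x - y) := rfl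
  have := hq.completeSpace hc
  let E (n : ℕ) : Set X := {x | q x < ∞ → r x ≤ n}
  have isClosed_E (n : ℕ) : IsClosed (E n) := by
    refine IsSeqClosed.isClosed fun u x hu hux hx => ?_
    rw [tendsto_iff_edist_tendsto_0] at hux
    refine (hlsc u x hux).trans (liminf_le_of_frequently_le' (Eventually.frequently ?_))
    filter_upwards [hux.eventually_lt_const ENNReal.zero_lt_top] with k hk
    refine hu k (lt_of_le_of_lt ?_ (ENNReal.add_lt_top.2 ⟨hk, hx⟩))
    simpa only [edist_eq, sub_add_cancel] using hq.add_le (u k - x) x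
  have iUnion_E : ⋃ n, E n = Set.univ := by
    refine Set.eq_univ_of_forall fun x => Set.mem_iUnion.2 ?_
    by_cases hx : q x < ∞
    · obtain ⟨n, hn⟩ := ENNReal.exists_nat_gt (hfin x hx).ne
      exact ⟨n, fun _ => hn.le⟩
    · exact ⟨0, fun h => absurd h hx⟩
  obtain ⟨x, hx, hxE⟩ := (dense_iUnion_interior_of_closed isClosed_E iUnion_E).inter_open_nonempty
    (Metric.eball 0 ∞) Metric.isOpen_eball ⟨0, Metric.mem_eball_self ENNReal.zero_lt_top⟩
  replace hx : q x < ∞ := by simpa [edist_eq] using hx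
  obtain ⟨n, hxn⟩ := Set.mem_iUnion.1 hxE
  obtain ⟨δ, hδ, hball⟩ := Metric.nhds_basis_eball.mem_iff.1 (mem_interior_iff_mem_nhds.1 hxn)
  obtain ⟨δ', hδ', hlt⟩ := ENNReal.lt_iff_exists_nnreal_btwn.1 hδ
  refine ⟨_, le_mul_of_forall_lt_imp_le hq hr (C := 2 * n + 1) (δ := δ') (by positivity)
    (by exact_mod_cast hδ') fun y hy => ?_⟩
  have hxy : r (x + y) ≤ n := by
    refine hball ?_ ((hq.add_le x y).trans_lt (ENNReal.add_lt_top.2 ⟨hx, hy.trans_le le_top⟩))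
    simpa [edist_eq] using hy.trans hlt
  calc r y ≤ r (x + y) + r x := by simpa using hr.sub_le (x + y) x
    _ ≤ n + n := add_le_add hxy (interior_subset hxn hx)
    _ ≤ (2 * n + 1 : ℝ≥0) := by push_cast; rw [two_mul]; exact le_self_add

end IsExtendedSeminorm

section TotallyBounded

variable {q : X → ℝ≥0∞} {S : Set X}

theorem CompactWith.totallyBoundedWith (hq : IsExtendedSeminorm q) (hS : CompactWith q S) :
    TotallyBoundedWith q S := by
  let _ := hq.toPseudoEMetricSpace
  have hseq : IsSeqCompact S := fun u hu => by
    simp only [tendsto_iff_edist_tendsto_0]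
    exact hS u hu
  intro ε hε
  obtain ⟨F, hF, hSF⟩ := EMetric.totallyBounded_iff.1 hseq.totallyBounded ε hε
  refine ⟨F, hF, fun x hx => ?_⟩
  obtain ⟨y, hy, hxy⟩ := Set.mem_iUnion₂.1 (hSF hx)
  exact ⟨y, hy, hxy⟩

theorem TotallyBoundedWith.relCompactWith (hq : IsExtendedSeminorm q) (hc : CompleteWith q)
    (hS : TotallyBoundedWith q S) : RelCompactWith q S := by
  let _ := hq.toPseudoEMetricSpace
  have := hq.completeSpace hc
  have htb : TotallyBounded S := EMetric.totallyBounded_iff.2 fun ε hε => by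
    obtain ⟨F, hF, hSF⟩ := hS ε hε
    refine ⟨F, hF, fun x hx => ?_⟩
    obtain ⟨y, hy, hxy⟩ := hSF x hx
    exact Set.mem_iUnion₂.2 ⟨y, hy, hxy⟩
  intro u hu
  obtain ⟨x, -, σ, hσ, hx⟩ := (htb.closure.isCompact_of_isClosed isClosed_closure).isSeqCompact
    fun n => subset_closure (hu n)
  exact ⟨σ, x, hσ, tendsto_iff_edist_tendsto_0.1 hx⟩

theorem totallyBoundedWith_of_approx (hq : IsExtendedSeminorm q)
    (h : ∀ ε : ℝ≥0∞, 0 < ε → ∃ S', TotallyBoundedWith q S' ∧ ∀ x ∈ S, ∃ y ∈ S', q (x - y) < ε) :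
    TotallyBoundedWith q S := by
  intro ε hε
  have hε' := ENNReal.half_pos hε.ne'
  obtain ⟨S', hS', happrox⟩ := h (ε / 2) hε'
  obtain ⟨F, hF, hnet⟩ := hS' (ε / 2) hε'
  refine ⟨F, hF, fun x hx => ?_⟩
  obtain ⟨y, hy, hxy⟩ := happrox x hx
  obtain ⟨z, hz, hyz⟩ := hnet y hy
  refine ⟨z, hz, (hq.sub_le_sub_add_sub x y z).trans_lt ?_⟩
  simpa only [ENNReal.add_halves] using ENNReal.add_lt_add hxy hyz

theorem CompactWith.smul {I : Set ℝ} (hI : IsCompact I) (hq : IsExtendedSeminorm q)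
    (hS : CompactWith q S) (hfin : ∀ x ∈ S, q x < ∞) : CompactWith q (I • S) := by
  intro u hu
  choose c hc x hx hcx using fun n => Set.mem_smul.1 (hu n)
  obtain ⟨x₀, hx₀, σ, hσ, hlim_x⟩ := hS x hx
  obtain ⟨c₀, hc₀, τ, hτ, hlim_c⟩ := hI.isSeqCompact fun n => hc (σ n)
  refine ⟨c₀ • x₀, Set.smul_mem_smul hc₀ hx₀, σ ∘ τ, hσ.comp hτ, ?_⟩
  have hlim : Tendsto (fun n => ‖c (σ (τ n))‖ₑ * q (x (σ (τ n)) - x₀) +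
      ‖c (σ (τ n)) - c₀‖ₑ * q x₀) atTop (𝓝 0) := by
    have h₁ := ENNReal.Tendsto.mul hlim_c.enorm (.inr ENNReal.zero_ne_top)
      (hlim_x.comp hτ.tendsto_atTop) (.inr enorm_ne_top)
    have h₂ := ENNReal.Tendsto.mul_const (hlim_c.sub_const c₀).enorm (.inr (hfin x₀ hx₀).ne)
    simpa using h₁.add h₂
  refine tendsto_of_tendsto_of_tendsto_of_le_of_le tendsto_const_nhds hlim (fun _ => zero_le)
    fun n => ?_
  have hsplit : u (σ (τ n)) - c₀ • x₀ =
      c (σ (τ n)) • (x (σ (τ n)) - x₀) + (c (σ (τ n)) - c₀) • x₀ := by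
    rw [← hcx, smul_sub, sub_smul]
    abel
  simp only [Function.comp_apply, hsplit]
  exact (hq.add_le _ _).trans (add_le_add (hq.smul_le _ _) (hq.smul_le _ _))

end TotallyBounded

theorem isExtendedSeminorm (N : CoupleNorm X) : IsExtendedSeminorm N.N where
  add_le := N.add_le
  smul_le c x := by rw [N.smul_eq, Real.enorm_eq_ofReal_abs]

theorem completeWith (N : CoupleNorm X) : CompleteWith N.N := by
  intro u hu
  obtain ⟨n₀, hn₀⟩ := hu 1 one_pos
  obtain ⟨x, hx⟩ := N.complete (fun n => u (n + n₀) - u n₀)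
    (fun n => (hn₀ _ (Nat.le_add_left _ _) _ le_rfl).trans ENNReal.one_lt_top) fun ε hε => by
      obtain ⟨n₁, hn₁⟩ := hu ε hε
      refine ⟨n₁, fun m n hm hn => ?_⟩
      simpa only [sub_sub_sub_cancel_right] using
        hn₁ _ (hm.trans (Nat.le_add_right _ _)) _ (hn.trans (Nat.le_add_right _ _))
  refine ⟨u n₀ + x, (tendsto_add_atTop_iff_nat n₀).1 ?_⟩
  simpa only [sub_sub] using hx

end Module

/-! ### Real interpolation -/

/-- The K-functional `Kfun` for generalized norms that need not satisfy any axiom. -/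
noncomputable def kFunctional {X : Type*} [AddCommGroup X] (q₀ q₁ : X → ℝ≥0∞) (t : ℝ) (x : X) :
    ℝ≥0∞ :=
  ⨅ y, q₀ y + ENNReal.ofReal t * q₁ (x - y)

section KFunctional

variable {X Y : Type*} [AddCommGroup X] [AddCommGroup Y] {q₀ q₁ : X → ℝ≥0∞}

theorem kFunctional_le (t : ℝ) (x y : X) :
    kFunctional q₀ q₁ t x ≤ q₀ y + ENNReal.ofReal t * q₁ (x - y) :=
  iInf_le _ y

theorem kFunctional_le_left (h : q₁ 0 = 0) (t : ℝ) (x : X) : kFunctional q₀ q₁ t x ≤ q₀ x := by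
  simpa [h] using kFunctional_le (q₀ := q₀) (q₁ := q₁) t x x

theorem kFunctional_le_right (h : q₀ 0 = 0) (t : ℝ) (x : X) :
    kFunctional q₀ q₁ t x ≤ ENNReal.ofReal t * q₁ x := by
  simpa [h] using kFunctional_le (q₀ := q₀) (q₁ := q₁) t x 0

theorem monotone_kFunctional (x : X) : Monotone fun t => kFunctional q₀ q₁ t x := fun s t hst => by
  simp only [kFunctional]
  gcongr

theorem kFunctional_le_max_mul (t : ℝ) (x : X) :
    kFunctional q₀ q₁ t x ≤ ENNReal.ofReal (max 1 t) * kFunctional q₀ q₁ 1 x := by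
  simp only [kFunctional]
  rw [ENNReal.mul_iInf_of_ne (by simp) ENNReal.ofReal_ne_top]
  refine iInf_mono fun y => ?_
  rw [mul_add, ENNReal.ofReal_one, one_mul]
  gcongr
  · exact le_mul_of_one_le_left zero_le (by simp)
  · exact le_max_right _ _

theorem kFunctional_map_le {r₀ r₁ : Y → ℝ≥0∞} {S : X → Y} {x : X} {ε : ℝ≥0} (hε : 0 < ε) {l : ℝ}
    (hl : 0 ≤ l) (h₀ : ∀ y, q₀ y < ∞ → r₀ (S y) ≤ ε * q₀ y)
    (h₁ : ∀ y, q₀ y < ∞ → r₁ (S x - S y) ≤ ε * ENNReal.ofReal l * q₁ (x - y)) (t : ℝ) :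
    kFunctional r₀ r₁ t (S x) ≤ ε * kFunctional q₀ q₁ (l * t) x := by
  have hε' : (ε : ℝ≥0∞) ≠ 0 := by exact_mod_cast hε.ne'
  rw [kFunctional.eq_def q₀, ENNReal.mul_iInf_of_ne hε' ENNReal.coe_ne_top]
  refine le_iInf fun y => ?_
  rcases eq_top_or_lt_top (q₀ y) with hy | hy
  · simp [hy, ENNReal.mul_top hε']
  calc kFunctional r₀ r₁ t (S x) ≤ r₀ (S y) + ENNReal.ofReal t * r₁ (S x - S y) :=
        kFunctional_le t _ _
    _ ≤ ε * q₀ y + ENNReal.ofReal t * (ε * ENNReal.ofReal l * q₁ (x - y)) := by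
        gcongr
        exacts [h₀ y hy, h₁ y hy]
    _ = ε * (q₀ y + ENNReal.ofReal (l * t) * q₁ (x - y)) := by
        rw [ENNReal.ofReal_mul hl]
        ring

end KFunctional

/-- The norm of the real interpolation space `(q₀, q₁)_{θ,p}` of a pair of generalized norms. -/
noncomputable def realInterpNorm {X : Type*} [AddCommGroup X] (q₀ q₁ : X → ℝ≥0∞) (θ : ℝ)
    (p : ℝ≥0∞) (x : X) : ℝ≥0∞ :=
  weightedLpNorm θ p fun t => kFunctional q₀ q₁ t x

section RealInterpNorm

variable {X Y : Type*} [AddCommGroup X] [AddCommGroup Y] {q₀ q₁ : X → ℝ≥0∞} {θ : ℝ} {p : ℝ≥0∞}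

theorem kFunctional_le_realInterpNorm (hθ : 0 ≤ θ) (hp : p ≠ 0) {t : ℝ} (ht : 0 < t) (x : X) :
    kFunctional q₀ q₁ t x ≤
      ENNReal.ofReal (Real.exp 1 * t) ^ θ * realInterpNorm q₀ q₁ θ p x :=
  le_rpow_mul_weightedLpNorm hθ hp (monotone_kFunctional x) ht

theorem realInterpNorm_map_le {r₀ r₁ : Y → ℝ≥0∞} {S : X → Y} {x : X} {ε : ℝ≥0} (hε : 0 < ε)
    {l : ℝ} (hl : 0 < l) (h₀ : ∀ y, q₀ y < ∞ → r₀ (S y) ≤ ε * q₀ y)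
    (h₁ : ∀ y, q₀ y < ∞ → r₁ (S x - S y) ≤ ε * ENNReal.ofReal l * q₁ (x - y)) :
    realInterpNorm r₀ r₁ θ p (S x) ≤ ε * (ENNReal.ofReal l ^ θ * realInterpNorm q₀ q₁ θ p x) :=
  (weightedLpNorm_le_mul ε fun t _ => kFunctional_map_le hε hl.le h₀ h₁ t).trans <|
    mul_le_mul_right (weightedLpNorm_comp_mul_left_le (monotone_kFunctional x).measurable hl) _

theorem realInterpNorm_lt_top (h₀ : q₀ 0 = 0) (h₁ : q₁ 0 = 0) (hθ₀ : 0 < θ) (hθ₁ : θ < 1)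
    (hp : 1 ≤ p) {x : X} (hx₀ : q₀ x < ∞) (hx₁ : q₁ x < ∞) : realInterpNorm q₀ q₁ θ p x < ∞ := by
  lift q₀ x to ℝ≥0 using hx₀.ne with a₀ ha₀
  lift q₁ x to ℝ≥0 using hx₁.ne with a₁ ha₁
  refine (weightedLpNorm_le_mul (max a₀ a₁) fun t _ => ?_).trans_lt
    (ENNReal.mul_lt_top ENNReal.coe_lt_top (weightedLpNorm_min_one_lt_top hθ₀ hθ₁ hp))
  rcases le_total t 1 with h | h
  · rw [min_eq_right h, mul_comm]
    refine (kFunctional_le_right h₀ t x).trans ?_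
    rw [← ha₁]
    gcongr
    exact le_max_right _ _
  · rw [min_eq_left h, ENNReal.ofReal_one, mul_one]
    refine (kFunctional_le_left h₁ t x).trans ?_
    rw [← ha₀]
    exact_mod_cast le_max_left _ _

theorem exists_forall_exists_sub_le_of_realInterpNorm_le (hθ₀ : 0 ≤ θ) (hθ₁ : θ < 1) (hp : p ≠ 0)
    (R : ℝ≥0) {η : ℝ≥0∞} (hη : 0 < η) :
    ∃ r : ℝ≥0, ∀ x, realInterpNorm q₀ q₁ θ p x ≤ R → ∃ y, q₀ y ≤ r ∧ q₁ (x - y) ≤ η := by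
  obtain ⟨η', hη', hlt⟩ := ENNReal.lt_iff_exists_nnreal_btwn.1 hη
  obtain ⟨t, ht, hsmall⟩ := exists_pos_mul_rpow_lt hθ₁ ((Real.exp 1).toNNReal ^ θ * R) hη'
  refine ⟨t.toNNReal * η', fun x hx => ?_⟩
  have hK : kFunctional q₀ q₁ t x < ENNReal.ofReal t * η' := by
    refine lt_of_le_of_lt ?_ hsmall
    calc kFunctional q₀ q₁ t x
        ≤ ENNReal.ofReal (Real.exp 1 * t) ^ θ * realInterpNorm q₀ q₁ θ p x :=
          kFunctional_le_realInterpNorm hθ₀ hp ht x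
      _ ≤ ENNReal.ofReal (Real.exp 1 * t) ^ θ * R := by gcongr
      _ = ((Real.exp 1).toNNReal ^ θ * R : ℝ≥0) * ENNReal.ofReal t ^ θ := by
          rw [ENNReal.ofReal_mul (Real.exp_nonneg 1), ENNReal.mul_rpow_of_nonneg _ _ hθ₀,
            ENNReal.coe_mul, ENNReal.coe_rpow_of_nonneg _ hθ₀, mul_right_comm]
          rfl
  obtain ⟨y, hy⟩ := iInf_lt_iff.1 hK
  refine ⟨y, le_self_add.trans hy.le, le_trans ?_ hlt.le⟩
  exact (ENNReal.mul_le_mul_iff_right (by simpa using ht) ENNReal.ofReal_ne_top).1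
    (le_add_self.trans hy.le)

end RealInterpNorm

section ExtendedSeminorm

variable {X : Type*} [AddCommGroup X] [Module ℝ X] {q₀ q₁ : X → ℝ≥0∞} {θ : ℝ} {p : ℝ≥0∞}

theorem IsExtendedSeminorm.kFunctional (h₀ : IsExtendedSeminorm q₀) (h₁ : IsExtendedSeminorm q₁)
    (t : ℝ) : IsExtendedSeminorm (kFunctional q₀ q₁ t) where
  add_le x x' := by
    refine ENNReal.le_iInf_add_iInf fun y y' => ?_
    calc CoupleNorm.kFunctional q₀ q₁ t (x + x')
        ≤ q₀ (y + y') + ENNReal.ofReal t * q₁ ((x - y) + (x' - y')) := by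
          simpa only [add_sub_add_comm] using kFunctional_le t (x + x') (y + y')
      _ ≤ (q₀ y + q₀ y') + ENNReal.ofReal t * (q₁ (x - y) + q₁ (x' - y')) := by
          gcongr
          exacts [h₀.add_le y y', h₁.add_le _ _]
      _ = _ := by ring
  smul_le c x := by
    rw [kFunctional.eq_def _ _ _ x, ENNReal.mul_iInf fun h => absurd h enorm_ne_top]
    refine le_iInf fun y => ?_
    calc CoupleNorm.kFunctional q₀ q₁ t (c • x)
        ≤ q₀ (c • y) + ENNReal.ofReal t * q₁ (c • (x - y)) := by
          simpa only [smul_sub] using kFunctional_le t (c • x) (c • y)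
      _ ≤ ‖c‖ₑ * q₀ y + ENNReal.ofReal t * (‖c‖ₑ * q₁ (x - y)) := by
          gcongr
          exacts [h₀.smul_le c y, h₁.smul_le c _]
      _ = _ := by ring

theorem CompleteWith.exists_tendsto_sum (hq : IsExtendedSeminorm q₀) (hc : CompleteWith q₀)
    {y : ℕ → X} (hy : ∀ k, q₀ (y k) ≤ 1 / 2 ^ k) :
    ∃ x, Tendsto (fun n => q₀ (∑ k ∈ Finset.range n, y k - x)) atTop (𝓝 0) := by
  let _ := hq.toPseudoEMetricSpace
  have edist_eq (x x' : X) : edist x x' = q₀ (x - x') := rfl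
  have := hq.completeSpace hc
  have hcauchy : CauchySeq fun n => ∑ k ∈ Finset.range n, y k := by
    refine cauchySeq_of_edist_le_geometric_two 1 ENNReal.one_ne_top fun n => ?_
    rw [edist_comm, edist_eq, Finset.sum_range_succ_sub_sum]
    exact hy n
  obtain ⟨x, hx⟩ := cauchySeq_tendsto_of_complete hcauchy
  exact ⟨x, tendsto_iff_edist_tendsto_0.1 hx⟩

theorem completeWith_kFunctional_one (h₀ : IsExtendedSeminorm q₀) (h₁ : IsExtendedSeminorm q₁)
    (hc₀ : CompleteWith q₀) (hc₁ : CompleteWith q₁) : CompleteWith (kFunctional q₀ q₁ 1) := by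
  let _ := (h₀.kFunctional h₁ 1).toPseudoEMetricSpace
  have edist_eq (x y : X) : edist x y = kFunctional q₀ q₁ 1 (x - y) := rfl
  have : CompleteSpace X := by
    refine EMetric.complete_of_convergent_controlled_sequences (fun n => 1 / 2 ^ n)
      (fun n => ENNReal.div_pos one_ne_zero (by simp)) fun u hu => ?_
    have exists_split (k : ℕ) : ∃ y, q₀ y + q₁ (u (k + 1) - u k - y) < 1 / 2 ^ k := by
      have h := hu k (k + 1) k k.le_succ le_rfl
      rw [edist_eq] at h
      simpa using iInf_lt_iff.1 h
    choose y hy using exists_split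
    obtain ⟨a, ha⟩ := hc₀.exists_tendsto_sum h₀ fun k => le_self_add.trans (hy k).le
    obtain ⟨b, hb⟩ := hc₁.exists_tendsto_sum h₁ fun k => le_add_self.trans (hy k).le
    refine ⟨u 0 + a + b, tendsto_iff_edist_tendsto_0.2 ?_⟩
    have hab := ha.add hb
    rw [add_zero] at hab
    refine tendsto_of_tendsto_of_tendsto_of_le_of_le tendsto_const_nhds hab (fun _ => zero_le)
      fun n => (kFunctional_le 1 _ (∑ k ∈ Finset.range n, y k - a)).trans_eq ?_
    rw [ENNReal.ofReal_one, one_mul, Finset.sum_sub_distrib, Finset.sum_range_sub]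
    congr 2
    abel
  intro u hu
  have hcauchy : CauchySeq u := EMetric.cauchySeq_iff.2 hu
  obtain ⟨x, hx⟩ := cauchySeq_tendsto_of_complete hcauchy
  exact ⟨x, tendsto_iff_edist_tendsto_0.1 hx⟩

theorem IsExtendedSeminorm.realInterpNorm (h₀ : IsExtendedSeminorm q₀)
    (h₁ : IsExtendedSeminorm q₁) (hp : 1 ≤ p) : IsExtendedSeminorm (realInterpNorm q₀ q₁ θ p) where
  add_le x y :=
    (weightedLpNorm_mono fun t _ => (h₀.kFunctional h₁ t).add_le x y).trans <|
      weightedLpNorm_add_le hp (monotone_kFunctional x).measurable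
        (monotone_kFunctional y).measurable
  smul_le c x := weightedLpNorm_le_mul ‖c‖₊ fun t _ => (h₀.kFunctional h₁ t).smul_le c x

theorem IsExtendedSeminorm.lowerSemicontinuousWith {q r : X → ℝ≥0∞} (hq : IsExtendedSeminorm q)
    {C : ℝ≥0} (h : ∀ x, q x ≤ C * r x) : LowerSemicontinuousWith r q := by
  intro u x hu
  have hlim : Tendsto (fun n => C * r (u n - x)) atTop (𝓝 0) := by
    simpa using ENNReal.Tendsto.const_mul hu (.inr (ENNReal.coe_ne_top (r := C)))
  refine ENNReal.le_of_forall_pos_le_add fun δ hδ _ => tsub_le_iff_right.1 ?_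
  refine le_liminf_of_le (by isBoundedDefault) ?_
  filter_upwards [hlim.eventually_lt_const (ENNReal.coe_pos.2 hδ)] with n hn
  refine tsub_le_iff_right.2 ?_
  calc q x ≤ q (u n) + q (u n - x) := by simpa using hq.sub_le (u n) (u n - x)
    _ ≤ q (u n) + δ := by gcongr; exact (h _).trans hn.le

theorem lowerSemicontinuousWith_realInterpNorm (h₀ : IsExtendedSeminorm q₀)
    (h₁ : IsExtendedSeminorm q₁) :
    LowerSemicontinuousWith (kFunctional q₀ q₁ 1) (realInterpNorm q₀ q₁ θ p) := fun u x hu =>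
  (weightedLpNorm_mono fun t _ =>
    (h₀.kFunctional h₁ t).lowerSemicontinuousWith (kFunctional_le_max_mul t) u x hu).trans <|
      weightedLpNorm_liminf_le fun n => (monotone_kFunctional (u n)).measurable

theorem completeWith_realInterpNorm (h₀ : IsExtendedSeminorm q₀) (h₁ : IsExtendedSeminorm q₁)
    (hc₀ : CompleteWith q₀) (hc₁ : CompleteWith q₁) (hθ : 0 ≤ θ) (hp : p ≠ 0) :
    CompleteWith (realInterpNorm q₀ q₁ θ p) :=
  (h₀.kFunctional h₁ 1).completeWith_of_lowerSemicontinuousWith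
    (completeWith_kFunctional_one h₀ h₁ hc₀ hc₁) (C := (Real.exp 1 * 1).toNNReal ^ θ)
    (fun x => by
      rw [ENNReal.coe_rpow_of_nonneg _ hθ]
      exact kFunctional_le_realInterpNorm hθ hp one_pos x)
    (lowerSemicontinuousWith_realInterpNorm h₀ h₁)

theorem exists_realInterpNorm_map_le {Z : Type*} [AddCommGroup Z] [Module ℝ Z] {r : Z → ℝ≥0∞}
    (h₀ : IsExtendedSeminorm q₀) (h₁ : IsExtendedSeminorm q₁) (hθ₀ : 0 < θ) (hθ₁ : θ < 1)
    (hp : 1 ≤ p) (hr : IsExtendedSeminorm r) (hc : CompleteWith r) (P : Z →ₗ[ℝ] X) {C : ℝ≥0}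
    (hP : ∀ z, kFunctional q₀ q₁ 1 (P z) ≤ C * r z)
    (hfin : ∀ z, r z < ∞ → q₀ (P z) < ∞ ∧ q₁ (P z) < ∞) :
    ∃ D : ℝ≥0, ∀ z, realInterpNorm q₀ q₁ θ p (P z) ≤ D * r z :=
  hr.exists_le_mul_of_lowerSemicontinuousWith hc ((h₀.realInterpNorm h₁ hp).comp_linearMap P)
    ((lowerSemicontinuousWith_realInterpNorm h₀ h₁).comp P hP) fun z hz =>
      realInterpNorm_lt_top h₀.map_zero h₁.map_zero hθ₀ hθ₁ hp (hfin z hz).1 (hfin z hz).2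

end ExtendedSeminorm

theorem interpNorm_eq_realInterpNorm {X : Type*} [AddCommGroup X] [Module ℝ X]
    (N₀ N₁ : CoupleNorm X) {θ : ℝ} (hθ : 0 ≤ θ) {p : ℝ≥0∞} (hp : p ≠ 0) :
    interpNorm N₀ N₁ θ p = realInterpNorm N₀.N N₁.N θ p := by
  funext x
  rw [interpNorm, realInterpNorm]
  split_ifs with hp'
  · rw [hp', weightedLpNorm_top_eq_iSup hθ (monotone_kFunctional x)]
    rfl
  · simp only [weightedLpNorm, eLpNorm_eq_lintegral_rpow_enorm_toReal hp hp', enorm_eq_self]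
    rfl

theorem exists_realInterpNorm_map_le_left_right {X : Type*} [AddCommGroup X] [Module ℝ X]
    (N₀ N₁ : CoupleNorm X) {θ : ℝ} (hθ₀ : 0 < θ) (hθ₁ : θ < 1) {p : ℝ≥0∞} (hp : 1 ≤ p)
    {P : X →ₗ[ℝ] X} {c : ℝ≥0}
    (hfin : ∀ x, N₀.N x < ∞ ∨ N₁.N x < ∞ → N₀.N (P x) < ∞ ∧ N₁.N (P x) < ∞)
    (hP₀ : ∀ x, N₀.N (P x) ≤ c * N₀.N x) (hP₁ : ∀ x, N₁.N (P x) ≤ c * N₁.N x) :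
    ∃ D₀ D₁ : ℝ≥0, (∀ x, realInterpNorm N₀.N N₁.N θ p (P x) ≤ D₀ * N₀.N x) ∧
      ∀ x, realInterpNorm N₀.N N₁.N θ p (P x) ≤ D₁ * N₁.N x := by
  have h₀ := N₀.isExtendedSeminorm
  have h₁ := N₁.isExtendedSeminorm
  obtain ⟨D₀, hD₀⟩ := exists_realInterpNorm_map_le h₀ h₁ hθ₀ hθ₁ hp h₀ N₀.completeWith P
    (fun x => (kFunctional_le_left h₁.map_zero 1 (P x)).trans (hP₀ x)) fun x hx => hfin x (.inl hx)
  obtain ⟨D₁, hD₁⟩ := exists_realInterpNorm_map_le h₀ h₁ hθ₀ hθ₁ hp h₁ N₁.completeWith P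
    (fun x => (kFunctional_le_right h₀.map_zero 1 (P x)).trans (by simpa using hP₁ x))
    fun x hx => hfin x (.inr hx)
  exact ⟨D₀, D₁, hD₀, hD₁⟩

/-! ### Approximation -/

section Approximation

variable {X Y : Type*} [AddCommGroup X] [AddCommGroup Y] [Module ℝ Y] {A₀ A₁ : X → ℝ≥0∞}
  {B₀ B₁ : Y → ℝ≥0∞} {T : X → Y} {C : ℝ≥0} {K : Set Y} {θ : ℝ} {p : ℝ≥0∞}

theorem lt_top_of_realInterpNorm_le (hA₁ : ∀ x y, A₁ (x + y) ≤ A₁ x + A₁ y)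
    (hA : ∀ x, A₀ x < ∞ → A₁ x < ∞) (hθ₀ : 0 ≤ θ) (hθ₁ : θ < 1) (hp : p ≠ 0) {R : ℝ≥0} {x : X}
    (hx : realInterpNorm A₀ A₁ θ p x ≤ R) : A₁ x < ∞ := by
  obtain ⟨r, hr⟩ := exists_forall_exists_sub_le_of_realInterpNorm_le (q₀ := A₀) (q₁ := A₁)
    hθ₀ hθ₁ hp R one_pos
  obtain ⟨y, hy, hxy⟩ := hr x hx
  rw [← sub_add_cancel x y]
  exact (hA₁ _ _).trans_lt (ENNReal.add_lt_top.2
    ⟨hxy.trans_lt ENNReal.one_lt_top, hA y (hy.trans_lt ENNReal.coe_lt_top)⟩)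

theorem realInterpNorm_sub_map_le (hB₀ : IsExtendedSeminorm B₀) (hB₁ : IsExtendedSeminorm B₁)
    (hTK : ∀ y, A₀ y < ∞ → ∃ k ∈ K, T y = (A₀ y).toReal • k) {x : X}
    (hT : ∀ y, A₀ y < ∞ → B₁ (T x - T y) ≤ C * A₁ (x - y)) {P : Y →ₗ[ℝ] Y} {c δ : ℝ≥0} {l : ℝ}
    (hP : ∀ b, B₁ (P b) ≤ c * B₁ b) (hPK : ∀ k ∈ K, B₀ (P k - k) ≤ δ) (hδ : 0 < δ) (hl : 0 < l)
    (hδl : (1 + c) * C ≤ δ * ENNReal.ofReal l) :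
    realInterpNorm B₀ B₁ θ p (T x - P (T x)) ≤
      δ * (ENNReal.ofReal l ^ θ * realInterpNorm A₀ A₁ θ p x) := by
  refine realInterpNorm_map_le (S := fun y => T y - P (T y)) hδ hl (fun y hy => ?_) fun y hy => ?_
  · obtain ⟨k, hk, hTy⟩ := hTK y hy
    calc B₀ (T y - P (T y)) = B₀ ((A₀ y).toReal • (P k - k)) := by
          rw [hB₀.map_sub_comm, hTy, map_smul, smul_sub]
      _ ≤ A₀ y * B₀ (P k - k) := by
          simpa [Real.enorm_of_nonneg, hy.ne] using hB₀.smul_le (A₀ y).toReal (P k - k)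
      _ ≤ δ * A₀ y := by
          rw [mul_comm]
          gcongr
          exact hPK k hk
  · calc B₁ (T x - P (T x) - (T y - P (T y)))
        = B₁ (T x - T y - P (T x - T y)) := by rw [map_sub, sub_sub_sub_comm]
      _ ≤ B₁ (T x - T y) + c * B₁ (T x - T y) :=
          (hB₁.sub_le _ _).trans (by gcongr; exact hP _)
      _ = (1 + c) * B₁ (T x - T y) := by ring
      _ ≤ (1 + c) * (C * A₁ (x - y)) := by gcongr; exact hT y hy
      _ ≤ δ * ENNReal.ofReal l * A₁ (x - y) := by rw [← mul_assoc]; gcongr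

theorem totallyBoundedWith_image_comp {Z : Type*} [AddCommGroup Z] [Module ℝ Z] {q : Z → ℝ≥0∞}
    (hB₀ : IsExtendedSeminorm B₀) (hq : IsExtendedSeminorm q) (hK : CompactWith B₀ K)
    (hKfin : ∀ k ∈ K, B₀ k < ∞) (hTK : ∀ y, A₀ y < ∞ → ∃ k ∈ K, T y = (A₀ y).toReal • k)
    {P : Y →ₗ[ℝ] Z} {D₀ D₁ : ℝ≥0} (hP₀ : ∀ b, q (P b) ≤ D₀ * B₀ b)
    (hP₁ : ∀ b, q (P b) ≤ D₁ * B₁ b) (hθ₀ : 0 ≤ θ) (hθ₁ : θ < 1) (hp : p ≠ 0) {R : ℝ≥0} {M : Set X}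
    (hM : ∀ x ∈ M, realInterpNorm A₀ A₁ θ p x ≤ R)
    (hT : ∀ x ∈ M, ∀ y, A₀ y < ∞ → B₁ (T x - T y) ≤ C * A₁ (x - y)) :
    TotallyBoundedWith q ((P ∘ T) '' M) := by
  refine totallyBoundedWith_of_approx hq fun ε hε => ?_
  obtain ⟨η, hη, hηε⟩ := ENNReal.exists_nnreal_pos_mul_lt (a := D₁ * C) (by finiteness) hε.ne'
  obtain ⟨r, hr⟩ := exists_forall_exists_sub_le_of_realInterpNorm_le (q₀ := A₀) (q₁ := A₁)
    hθ₀ hθ₁ hp R (ENNReal.coe_pos.2 hη)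
  refine ⟨P '' (Set.Icc 0 (r : ℝ) • K), ?_, Set.forall_mem_image.2 fun x hx => ?_⟩
  · exact ((hK.smul isCompact_Icc hB₀ hKfin).totallyBoundedWith hB₀).image fun b b' => by
      simpa only [map_sub] using hP₀ (b - b')
  obtain ⟨y, hy, hxy⟩ := hr x (hM x hx)
  have hyfin : A₀ y < ∞ := hy.trans_lt ENNReal.coe_lt_top
  obtain ⟨k, hk, hTy⟩ := hTK y hyfin
  refine ⟨P (T y), Set.mem_image_of_mem P ?_, ?_⟩
  · rw [hTy]
    exact Set.smul_mem_smul
      ⟨ENNReal.toReal_nonneg, ENNReal.toReal_le_of_le_ofReal r.2 (by simpa using hy)⟩ hk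
  · calc q (P (T x) - P (T y)) ≤ D₁ * B₁ (T x - T y) := by
          simpa only [map_sub] using hP₁ (T x - T y)
      _ ≤ D₁ * (C * η) := by
          gcongr
          exact (hT x hx y hyfin).trans (by gcongr)
      _ = η * (D₁ * C) := by ring
      _ < ε := hηε

end Approximation

end CoupleNorm

open CoupleNorm in
theorem stmt8_general {X Y : Type*} [AddCommGroup X] [AddCommGroup Y] [Module ℝ Y]
    {A₀ A₁ : X → ℝ≥0∞} (hA₁ : ∀ x y, A₁ (x + y) ≤ A₁ x + A₁ y) (hA : ∀ x, A₀ x < ∞ → A₁ x < ∞)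
    {B₀ B₁ : CoupleNorm Y} (hH : PerssonH B₀ B₁) {T : X → Y} {C : ℝ≥0}
    (hT : ∀ x y, A₁ x < ∞ → A₁ y < ∞ → B₁.N (T x - T y) ≤ C * A₁ (x - y)) {K : Set Y}
    (hKfin : K ⊆ {b | B₀.N b < ∞}) (hK : CompactWith B₀.N K)
    (hTK : ∀ x, A₀ x < ∞ → ∃ k ∈ K, T x = (A₀ x).toReal • k) {θ : ℝ} (hθ₀ : 0 < θ) (hθ₁ : θ < 1)
    {p : ℝ≥0∞} (hp : 1 ≤ p) {M : Set X} (hM : BddWith (realInterpNorm A₀ A₁ θ p) M) :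
    RelCompactWith (interpNorm B₀ B₁ θ p) (T '' M) := by
  obtain ⟨R, hR⟩ := hM
  obtain ⟨c, -, hP⟩ := hH K hKfin hK
  have hp₀ : p ≠ 0 := (one_pos.trans_le hp).ne'
  have hB₀ := B₀.isExtendedSeminorm
  have hB₁ := B₁.isExtendedSeminorm
  have hT_le (x : X) (hx : x ∈ M) (y : X) (hy : A₀ y < ∞) : B₁.N (T x - T y) ≤ C * A₁ (x - y) :=
    hT x y (lt_top_of_realInterpNorm_le hA₁ hA hθ₀.le hθ₁ hp₀ (hR x hx)) (hA y hy)
  have hq : IsExtendedSeminorm (realInterpNorm B₀.N B₁.N θ p) := hB₀.realInterpNorm hB₁ hp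
  rw [interpNorm_eq_realInterpNorm B₀ B₁ hθ₀.le hp₀]
  refine (totallyBoundedWith_of_approx hq fun ε hε => ?_).relCompactWith hq
    (completeWith_realInterpNorm hB₀ hB₁ B₀.completeWith B₁.completeWith hθ₀.le hp₀)
  obtain ⟨δ, l, hδ, hl, hδl, hlt⟩ := exists_mul_eq_and_mul_rpow_mul_lt hθ₁
    (C := (1 + c.toNNReal) * C + 1) (by positivity) R.toNNReal hε
  obtain ⟨P, hPfin, hP₀, hP₁, hPK⟩ := hP δ hδ
  obtain ⟨D₀, D₁, hD₀, hD₁⟩ :=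
    exists_realInterpNorm_map_le_left_right B₀ B₁ hθ₀ hθ₁ hp hPfin hP₀ hP₁
  refine ⟨(P ∘ T) '' M, totallyBoundedWith_image_comp hB₀ hq hK hKfin hTK hD₀ hD₁ hθ₀.le hθ₁ hp₀ hR
    hT_le, Set.forall_mem_image.2 fun x hx => ⟨P (T x), Set.mem_image_of_mem _ hx, ?_⟩⟩
  calc realInterpNorm B₀.N B₁.N θ p (T x - P (T x))
      ≤ δ * (ENNReal.ofReal l ^ θ * realInterpNorm A₀ A₁ θ p x) :=
        realInterpNorm_sub_map_le hB₀ hB₁ hTK (hT_le x hx) hP₁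
          (fun k hk => by simpa using (hPK k hk).le) hδ hl (hδl.ge.trans' (by norm_cast; simp))
    _ ≤ δ * (ENNReal.ofReal l ^ θ * R.toNNReal) := by gcongr; exact hR x hx
    _ < ε := hlt

/-- the main theorem, compact interpolation under condition (H). -/
theorem stmt8 {X Y : Type*} [AddCommGroup X] [Module ℝ X] [AddCommGroup Y] [Module ℝ Y]
    (A0 A1 : CoupleNorm X) (B0 B1 : CoupleNorm Y)
    (hA : CoupleNorm.Embeds A0 A1) (hH : PerssonH B0 B1)
    (T : X → Y) (C0 C1 : ℝ) (hC0 : 0 < C0) (hC1 : 0 < C1)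
    (hT0 : ∀ a : X, B0.N (T a) ≤ ENNReal.ofReal C0 * A0.N a)
    (hT1 : ∀ a a' : X, A1.N a < ∞ → A1.N a' < ∞ →
      B1.N (T a - T a') ≤ ENNReal.ofReal C1 * A1.N (a - a'))
    (K : Set Y) (hKsub : K ⊆ {b | B0.N b < ∞}) (hKcpt : CoupleNorm.CompactWith B0.N K)
    (hTK : ∀ a : X, A0.N a < ∞ → ∃ k ∈ K, T a = (A0.N a).toReal • k) :
    ∀ θ : ℝ, 0 < θ → θ < 1 → ∀ p : ℝ≥0∞, 1 ≤ p →
      ∀ M : Set X, CoupleNorm.BddWith (CoupleNorm.interpNorm A0 A1 θ p) M →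
        CoupleNorm.RelCompactWith (CoupleNorm.interpNorm B0 B1 θ p) (T '' M) := by
  intro θ hθ₀ hθ₁ p hp M hM
  obtain ⟨c, -, hc⟩ := hA
  rw [CoupleNorm.interpNorm_eq_realInterpNorm A0 A1 hθ₀.le (one_pos.trans_le hp).ne'] at hM
  exact stmt8_general A1.add_le (fun x hx => (hc x).trans_lt (ENNReal.mul_lt_top (by simp) hx)) hH
    hT1 hKsub hKcpt hTK hθ₀ hθ₁ hp hM
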